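/- arXiv:1104.4360 — 2 statements merged into one kernel-verified Lean document; each statement's English description precedes it below -/
import Mathlib

section
/- Let Z be a real random variable with a continuous density ψ for which there exist α ∈ (0,2) and constants 0 < c₁ ≤ c₂ such that c₁ (1+|x|)^{-(1+α)} ≤ ψ(x) ≤ c₂ (1+|x|)^{-(1+α)} for all x ∈ ℝ (as is the case for any non-extremal, non-normal stable density). Then, for any real random variable X, the relative entropy D(X‖Z) is finite if and only if X has a density p with E[log(1+|X|)] < +∞ and finite entropy h(X) = -∫ p(x) log p(x) dx. -/
open MeasureTheory
open scoped Classical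

/-- The extended-real-valued integral `∫ f dμ`, defined as the difference of the
lintegrals of the positive and negative parts of `f`. -/
noncomputable def eInt {α : Type*} [MeasurableSpace α] (μ : Measure α) (f : α → ℝ) : EReal :=
  ((∫⁻ x, ENNReal.ofReal (f x) ∂μ) : EReal) - ((∫⁻ x, ENNReal.ofReal (-(f x)) ∂μ) : EReal)

/-- Relative entropy (Kullback-Leibler divergence) `D(μ‖ν) = ∫ log (dμ/dν) dμ` if
`μ ≪ ν`, and `+∞` otherwise. -/
noncomputable def klDivE {α : Type*} [MeasurableSpace α] (μ ν : Measure α) : EReal :=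
  if μ ≪ ν then eInt μ (fun x => Real.log ((μ.rnDeriv ν x).toReal)) else ⊤

/-!
Write `μ` for the law of `X` and `ν = ψ m` for the law of `Z`, where `m` is Lebesgue measure. If
`μ ≪ m` then `log (dμ/dν) = log (dμ/dm) - log ψ`, and `|log ψ|` is at most an affine function of
`log (1 + ‖x‖)`. So as soon as `log (1 + ‖x‖)` is `μ`-integrable, finite relative entropy and
finite entropy are the same thing. That finite relative entropy forces this integrability is the
Donsker-Varadhan argument: `exp (ε log (1 + ‖x‖)) = (1 + ‖x‖) ^ ε` is `ν`-integrable for small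
`ε > 0`, and the Young inequality `s t ≤ s log s + exp t`, at `s = dμ/dν`, `t = ε log (1 + ‖x‖)`,
transfers this to `μ`.
-/

open Real
open scoped ENNReal

section RelativeEntropy

variable {α : Type*} [MeasurableSpace α] {μ ν m : Measure α} {f ψ : α → ℝ}

lemma integrable_iff_lintegral_ofReal_ne_top (hf : AEMeasurable f μ) :
    Integrable f μ ↔
      ∫⁻ x, ENNReal.ofReal (f x) ∂μ ≠ ∞ ∧ ∫⁻ x, ENNReal.ofReal (-f x) ∂μ ≠ ∞ := by
  refine ⟨fun h => ⟨h.lintegral_lt_top.ne, h.neg.lintegral_lt_top.ne⟩, fun ⟨hpos, hneg⟩ => ?_⟩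
  have hparts := (integrable_toReal_of_lintegral_ne_top hf.ennreal_ofReal hpos).sub
    (integrable_toReal_of_lintegral_ne_top hf.neg.ennreal_ofReal hneg)
  simpa only [Pi.sub_def, Pi.neg_apply, ENNReal.toReal_ofReal', max_zero_sub_eq_self] using hparts

lemma coe_ennreal_sub_ne_top_and_ne_bot_iff (a b : ℝ≥0∞) :
    ((a : EReal) - b ≠ ⊤ ∧ (a : EReal) - b ≠ ⊥) ↔ a ≠ ∞ ∧ b ≠ ∞ := by
  induction a with
  | top => induction b <;> simp
  | coe a =>
    induction b with
    | top => simp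
    | coe b =>
      have hsub : ((a : ℝ≥0∞) : EReal) - ((b : ℝ≥0∞) : EReal) = ((a - b : ℝ) : EReal) := rfl
      simp [hsub, -EReal.coe_sub]

lemma eInt_ne_top_and_ne_bot_iff (hf : AEMeasurable f μ) :
    (eInt μ f ≠ ⊤ ∧ eInt μ f ≠ ⊥) ↔ Integrable f μ := by
  rw [eInt, coe_ennreal_sub_ne_top_and_ne_bot_iff, integrable_iff_lintegral_ofReal_ne_top hf]

lemma klDivE_ne_top_and_ne_bot_iff :
    (klDivE μ ν ≠ ⊤ ∧ klDivE μ ν ≠ ⊥) ↔ μ ≪ ν ∧ Integrable (llr μ ν) μ := by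
  by_cases hμν : μ ≪ ν
  · rw [klDivE, if_pos hμν, ← llr_def, eInt_ne_top_and_ne_bot_iff (measurable_llr μ ν).aemeasurable]
    exact (and_iff_right hμν).symm
  · simp [klDivE, hμν]

lemma mul_le_mul_log_add_exp {s : ℝ} (hs : 0 ≤ s) (t : ℝ) : s * t ≤ s * log s + exp t := by
  rcases hs.eq_or_lt with rfl | hs
  · simpa using (exp_pos t).le
  · have hexp := add_one_le_exp (t - log s)
    rw [exp_sub, exp_log hs, le_div_iff₀ hs] at hexp
    linarith

lemma integrable_of_integrable_llr_of_integrable_exp [SigmaFinite μ] [SigmaFinite ν]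
    (hμν : μ ≪ ν) (hllr : Integrable (llr μ ν) μ) (hf : AEStronglyMeasurable f ν)
    (hexp : Integrable (fun x => exp |f x|) ν) : Integrable f μ := by
  have hent := (integrable_rnDeriv_mul_log_iff hμν).2 hllr
  refine (integrable_rnDeriv_smul_iff hμν).1 <| (hent.abs.add hexp).mono'
    ((Measure.measurable_rnDeriv μ ν).ennreal_toReal.aestronglyMeasurable.smul hf)
    (ae_of_all _ fun x => ?_)
  have hs : 0 ≤ (μ.rnDeriv ν x).toReal := ENNReal.toReal_nonneg
  calc ‖(μ.rnDeriv ν x).toReal • f x‖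
      = (μ.rnDeriv ν x).toReal * |f x| := by
        rw [smul_eq_mul, norm_eq_abs, abs_mul, abs_of_nonneg hs]
    _ ≤ (μ.rnDeriv ν x).toReal * log (μ.rnDeriv ν x).toReal + exp |f x| :=
        mul_le_mul_log_add_exp hs _
    _ ≤ |(μ.rnDeriv ν x).toReal * log (μ.rnDeriv ν x).toReal| + exp |f x| := by
        gcongr; exact le_abs_self _

lemma exists_density_integrable_mul_log_iff [SigmaFinite μ] [SigmaFinite m] :
    (∃ p : α → ℝ, Measurable p ∧ (∀ x, 0 ≤ p x) ∧
      μ = m.withDensity (fun x => ENNReal.ofReal (p x)) ∧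
      Integrable (fun x => p x * log (p x)) m) ↔
    μ ≪ m ∧ Integrable (llr μ m) μ := by
  constructor
  · rintro ⟨p, hp, hp0, rfl, hent⟩
    have hac := withDensity_absolutelyContinuous m fun x => ENNReal.ofReal (p x)
    refine ⟨hac, (integrable_rnDeriv_mul_log_iff hac).1 (hent.congr ?_)⟩
    filter_upwards [Measure.rnDeriv_withDensity m hp.ennreal_ofReal] with x hx
    rw [hx, ENNReal.toReal_ofReal (hp0 x)]
  · rintro ⟨hac, hllr⟩
    refine ⟨fun x => (μ.rnDeriv m x).toReal, (Measure.measurable_rnDeriv μ m).ennreal_toReal,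
      fun x => ENNReal.toReal_nonneg, ?_, (integrable_rnDeriv_mul_log_iff hac).2 hllr⟩
    rw [withDensity_congr_ae (ofReal_toReal_ae_eq (Measure.rnDeriv_lt_top μ m)),
      Measure.withDensity_rnDeriv_eq μ m hac]

lemma absolutelyContinuous_withDensity_ofReal_iff (hψ : AEMeasurable ψ m)
    (hψ_pos : ∀ᵐ x ∂m, 0 < ψ x) :
    μ ≪ m.withDensity (fun x => ENNReal.ofReal (ψ x)) ↔ μ ≪ m := by
  refine ⟨fun h => h.trans (withDensity_absolutelyContinuous _ _), fun h => h.trans ?_⟩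
  refine withDensity_absolutelyContinuous' hψ.ennreal_ofReal ?_
  filter_upwards [hψ_pos] with x hx using (ENNReal.ofReal_pos.2 hx).ne'

lemma llr_withDensity_ofReal_right [SigmaFinite μ] [SigmaFinite m] (hμm : μ ≪ m)
    (hψ : AEMeasurable ψ m) (hψ_pos : ∀ᵐ x ∂m, 0 < ψ x) :
    llr μ (m.withDensity fun x => ENNReal.ofReal (ψ x)) =ᵐ[μ]
      fun x => llr μ m x - log (ψ x) := by
  have hderiv := Measure.rnDeriv_withDensity_right μ m hψ.ennreal_ofReal
    (hψ_pos.mono fun x hx => (ENNReal.ofReal_pos.2 hx).ne')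
    (ae_of_all _ fun x => ENNReal.ofReal_ne_top)
  filter_upwards [hμm.ae_le hderiv, hμm.ae_le hψ_pos, Measure.rnDeriv_pos hμm,
    hμm.ae_le (Measure.rnDeriv_lt_top μ m)] with x hx hψx hpos hlt
  rw [llr, hx, ENNReal.toReal_mul, ENNReal.toReal_inv, ENNReal.toReal_ofReal hψx.le,
    log_mul (inv_ne_zero hψx.ne') (ENNReal.toReal_pos hpos.ne' hlt.ne).ne', log_inv, llr]
  ring

theorem absolutelyContinuous_and_integrable_llr_withDensity_iff [IsFiniteMeasure μ]
    [SigmaFinite m] (hψ : AEMeasurable ψ m) (hψ_pos : ∀ᵐ x ∂m, 0 < ψ x)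
    (hf : AEStronglyMeasurable f m) {A B ε : ℝ} (hε : ε ≠ 0)
    (hlogψ : ∀ᵐ x ∂m, |log (ψ x)| ≤ A + B * f x)
    (hexp : Integrable (fun x => exp |ε * f x|) (m.withDensity fun x => ENNReal.ofReal (ψ x))) :
    (μ ≪ m.withDensity (fun x => ENNReal.ofReal (ψ x)) ∧
      Integrable (llr μ (m.withDensity fun x => ENNReal.ofReal (ψ x))) μ) ↔
    (μ ≪ m ∧ Integrable (llr μ m) μ) ∧ Integrable f μ := by
  rw [absolutelyContinuous_withDensity_ofReal_iff hψ hψ_pos, and_assoc]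
  refine and_congr_right fun hμm => ?_
  have hlog_int (hfμ : Integrable f μ) : Integrable (fun x => log (ψ x)) μ :=
    ((integrable_const A).add (hfμ.const_mul B)).mono'
      (hψ.mono_ac hμm).log.aestronglyMeasurable (hμm.ae_le hlogψ)
  have hsplit := llr_withDensity_ofReal_right hμm hψ hψ_pos
  constructor
  · intro hllr
    have hfμ : Integrable f μ := by
      have hεf := integrable_of_integrable_llr_of_integrable_exp
        ((absolutelyContinuous_withDensity_ofReal_iff hψ hψ_pos).2 hμm) hllr
        ((hf.const_mul ε).mono_ac (withDensity_absolutelyContinuous _ _)) hexp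
      simpa [hε] using hεf.const_mul ε⁻¹
    refine ⟨(hllr.add (hlog_int hfμ)).congr ?_, hfμ⟩
    filter_upwards [hsplit] with x hx
    simp [hx]
  · rintro ⟨hllr, hfμ⟩
    exact (hllr.sub (hlog_int hfμ)).congr hsplit.symm

end RelativeEntropy

section PowerTails

lemma abs_log_le_of_rpow_bounds {t y c₁ c₂ r s : ℝ} (ht : 1 ≤ t) (hc₁ : 0 < c₁)
    (hlow : c₁ * t ^ (-s) ≤ y) (hup : y ≤ c₂ * t ^ (-r)) :
    |log y| ≤ (|log c₁| + |log c₂|) + (|s| + |r|) * log t := by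
  have ht0 : 0 < t := one_pos.trans_le ht
  have hlow_pos : 0 < c₁ * t ^ (-s) := by positivity
  have hy : 0 < y := hlow_pos.trans_le hlow
  have hc₂ : 0 < c₂ := pos_of_mul_pos_left (hy.trans_le hup) (by positivity)
  have hlog_low : log c₁ - s * log t ≤ log y := by
    have := log_le_log hlow_pos hlow
    rwa [log_mul hc₁.ne' (by positivity), log_rpow ht0, neg_mul, ← sub_eq_add_neg] at this
  have hlog_up : log y ≤ log c₂ - r * log t := by
    have := log_le_log hy hup
    rwa [log_mul hc₂.ne' (by positivity), log_rpow ht0, neg_mul, ← sub_eq_add_neg] at this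
  have hlogt : 0 ≤ log t := log_nonneg ht
  have hs : s * log t ≤ |s| * log t := by gcongr; exact le_abs_self s
  have hr : -r * log t ≤ |r| * log t := by gcongr; exact neg_le_abs r
  have hs0 : 0 ≤ |s| * log t := by positivity
  have hr0 : 0 ≤ |r| * log t := by positivity
  rw [abs_le]
  constructor <;>
    linarith [neg_abs_le (log c₁), le_abs_self (log c₂), abs_nonneg (log c₁), abs_nonneg (log c₂)]

variable {E : Type*} [NormedAddCommGroup E] [NormedSpace ℝ E] [FiniteDimensional ℝ E]
  [MeasurableSpace E] [BorelSpace E] (m : Measure E) [m.IsAddHaarMeasure] {ψ : E → ℝ}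

lemma integrable_one_add_norm_rpow_withDensity (hψ : Measurable ψ) (hψ0 : ∀ x, 0 ≤ ψ x)
    {c r ε : ℝ} (hε : Module.finrank ℝ E + ε < r)
    (hup : ∀ x, ψ x ≤ c * (1 + ‖x‖) ^ (-r)) :
    Integrable (fun x => (1 + ‖x‖) ^ ε) (m.withDensity fun x => ENNReal.ofReal (ψ x)) := by
  rw [integrable_withDensity_iff hψ.ennreal_ofReal (ae_of_all _ fun x => ENNReal.ofReal_lt_top)]
  have hdecay : Integrable (fun x : E => (1 + ‖x‖) ^ (-(r - ε))) m :=
    integrable_one_add_norm (by linarith)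
  refine (hdecay.const_mul c).mono' (by fun_prop) (ae_of_all _ fun x => ?_)
  have hx : 0 < 1 + ‖x‖ := by positivity
  have hψx := hψ0 x
  rw [ENNReal.toReal_ofReal hψx, norm_of_nonneg (by positivity)]
  calc (1 + ‖x‖) ^ ε * ψ x
      ≤ (1 + ‖x‖) ^ ε * (c * (1 + ‖x‖) ^ (-r)) := by gcongr; exact hup x
    _ = c * (1 + ‖x‖) ^ (-(r - ε)) := by
        rw [mul_left_comm, ← rpow_add hx, neg_sub, sub_eq_add_neg]

theorem stmt_5_general {Ω : Type*} [MeasurableSpace Ω] (P : Measure Ω) [IsFiniteMeasure P]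
    {X : Ω → E} (hX : AEMeasurable X P) (hψ : Measurable ψ) {r s c₁ c₂ : ℝ}
    (hr : Module.finrank ℝ E < r) (hc₁ : 0 < c₁)
    (hlow : ∀ x, c₁ * (1 + ‖x‖) ^ (-s) ≤ ψ x) (hup : ∀ x, ψ x ≤ c₂ * (1 + ‖x‖) ^ (-r)) :
    (klDivE (P.map X) (m.withDensity fun x => ENNReal.ofReal (ψ x)) ≠ ⊤ ∧
      klDivE (P.map X) (m.withDensity fun x => ENNReal.ofReal (ψ x)) ≠ ⊥) ↔
    ∃ p : E → ℝ, Measurable p ∧ (∀ x, 0 ≤ p x) ∧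
      P.map X = m.withDensity (fun x => ENNReal.ofReal (p x)) ∧
      Integrable (fun ω => log (1 + ‖X ω‖)) P ∧
      Integrable (fun x => p x * log (p x)) m := by
  have hψ_pos (x : E) : 0 < ψ x := lt_of_lt_of_le (by positivity) (hlow x)
  have hlog_meas : Measurable fun x : E => log (1 + ‖x‖) := by fun_prop
  obtain ⟨ε, hε0, hε⟩ : ∃ ε > 0, Module.finrank ℝ E + ε < r :=
    ⟨(r - Module.finrank ℝ E) / 2, by linarith, by linarith⟩
  have hexp (x : E) : exp |ε * log (1 + ‖x‖)| = (1 + ‖x‖) ^ ε := by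
    have hlog : 0 ≤ log (1 + ‖x‖) := log_nonneg (by simp)
    rw [abs_of_nonneg (by positivity), rpow_def_of_pos (by positivity), mul_comm]
  have hmoment := integrable_one_add_norm_rpow_withDensity m hψ (fun x => (hψ_pos x).le) hε hup
  rw [klDivE_ne_top_and_ne_bot_iff,
    absolutelyContinuous_and_integrable_llr_withDensity_iff hψ.aemeasurable (ae_of_all _ hψ_pos)
      hlog_meas.aestronglyMeasurable hε0.ne'
      (ae_of_all _ fun x => abs_log_le_of_rpow_bounds (by simp) hc₁ (hlow x) (hup x))
      (by simpa only [hexp]),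
    ← exists_density_integrable_mul_log_iff,
    integrable_map_measure hlog_meas.aestronglyMeasurable hX]
  exact ⟨fun ⟨⟨p, hp, hp0, hlaw, hent⟩, hlog⟩ => ⟨p, hp, hp0, hlaw, hlog, hent⟩,
    fun ⟨p, hp, hp0, hlaw, hlog, hent⟩ => ⟨⟨p, hp, hp0, hlaw, hent⟩, hlog⟩⟩

end PowerTails

/-- **Corollary 2.4.** Let `Z` have a continuous density `ψ` satisfying
`c₁ (1+|x|)^{-(1+α)} ≤ ψ(x) ≤ c₂ (1+|x|)^{-(1+α)}` for some `α ∈ (0,2)` and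
`0 < c₁ ≤ c₂` (as for non-extremal, non-normal stable densities). Then for any real
random variable `X`: `D(X‖Z) < ∞` iff `X` has a density `p` with
`E log(1+|X|) < ∞` and finite entropy. -/
theorem stmt_5
    {Ω : Type*} [MeasurableSpace Ω] (P : Measure Ω) [IsProbabilityMeasure P]
    (X Z : Ω → ℝ) (hX : Measurable X) (hZ : Measurable Z)
    (ψ : ℝ → ℝ) (hψc : Continuous ψ)
    (hZlaw : Measure.map Z P = volume.withDensity (fun x => ENNReal.ofReal (ψ x)))
    (α c₁ c₂ : ℝ) (hα0 : 0 < α) (hα2 : α < 2) (hc₁ : 0 < c₁) (hc₁₂ : c₁ ≤ c₂)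
    (hlow : ∀ x : ℝ, c₁ * (1 + |x|) ^ (-(1 + α)) ≤ ψ x)
    (hup : ∀ x : ℝ, ψ x ≤ c₂ * (1 + |x|) ^ (-(1 + α))) :
    (klDivE (Measure.map X P) (Measure.map Z P) ≠ ⊤ ∧
      klDivE (Measure.map X P) (Measure.map Z P) ≠ ⊥) ↔
    ∃ p : ℝ → ℝ, Measurable p ∧ (∀ x, 0 ≤ p x) ∧
      Measure.map X P = volume.withDensity (fun x => ENNReal.ofReal (p x)) ∧
      Integrable (fun ω => Real.log (1 + |X ω|)) P ∧
      Integrable (fun x => p x * Real.log (p x)) volume := by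
  rw [hZlaw]
  exact stmt_5_general volume P hX.aemeasurable hψc.measurable (by simpa using hα0) hc₁ hlow hup
end

section
/- For every ε ∈ (0,1] there is a constant C_ε > 0, depending only on ε, with the following property: for all real random variables X with bounded density p and Z with density ψ such that ψ(x) > 0 for almost every x, setting Δ = sup_x |p(x) − ψ(x)|, the relative entropy satisfies D(X‖Z) ≤ C_ε · Δ^ε · ∫ ψ(x)^{-ε} |p(x) − ψ(x)| dx, as extended real numbers in [0, +∞]. -/
open MeasureTheory

/-- Relative entropy `D(p‖ψ) = ∫ p log(p/ψ)` of probability densities on `ℝ`. -/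
noncomputable def relEntD (p ψ : ℝ → ℝ) : EReal :=
  eInt volume (fun x => p x * Real.log (p x / ψ x))

/-!
Since `∫ p = ∫ ψ`, one may add `ψ - p` to the integrand of `D(p‖ψ)`, which turns it into
`ψ · klFun (p / ψ)` with `klFun t = t log t + 1 - t`. This function vanishes to second order at
`t = 1` and grows more slowly than every power `t ^ (1 + ε)` with `ε > 0`, so that
`klFun t ≤ ε⁻¹ |t - 1| ^ (1 + ε)` for all `t ≥ 0` when `0 < ε ≤ 1`. Hence
`D(p‖ψ) ≤ ε⁻¹ ∫ ψ ^ (-ε) |p - ψ| ^ (1 + ε)`, and `C_ε = ε⁻¹` will do.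
-/

section Pointwise

open InformationTheory

variable {ε t q s d : ℝ}

lemma log_le_inv_mul_sub_one_rpow (hε0 : 0 < ε) (hε1 : ε ≤ 1) (ht : 1 ≤ t) :
    Real.log t ≤ ε⁻¹ * (t - 1) ^ ε := by
  have ht1 : 0 ≤ t - 1 := sub_nonneg.2 ht
  have subadd : t ^ ε ≤ (t - 1) ^ ε + 1 := by
    simpa using Real.rpow_add_le_add_rpow ht1 zero_le_one hε0.le hε1
  rw [le_inv_mul_iff₀ hε0]
  calc ε * Real.log t = Real.log (t ^ ε) := (Real.log_rpow (by linarith) ε).symm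
    _ ≤ t ^ ε - 1 := Real.log_le_sub_one_of_pos (by positivity)
    _ ≤ (t - 1) ^ ε := by linarith

lemma klFun_le_sub_one_mul_log (ht : 0 < t) : klFun t ≤ (t - 1) * Real.log t := by
  have := Real.log_le_sub_one_of_pos ht
  rw [klFun_apply]
  linarith

lemma klFun_le_sub_one_sq (ht : 0 ≤ t) : klFun t ≤ (t - 1) ^ 2 := by
  have : t * Real.log t ≤ t * (t - 1) := by
    rcases ht.eq_or_lt with rfl | ht0
    · simp
    · exact mul_le_mul_of_nonneg_left (Real.log_le_sub_one_of_pos ht0) ht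
  rw [klFun_apply]
  linarith

lemma klFun_le_inv_mul_abs_sub_one_rpow (hε0 : 0 < ε) (hε1 : ε ≤ 1) (ht : 0 ≤ t) :
    klFun t ≤ ε⁻¹ * |t - 1| ^ (1 + ε) := by
  rcases le_total t 1 with ht1 | ht1
  · have abs_le_one : |t - 1| ≤ 1 := abs_le.2 ⟨by linarith, by linarith⟩
    calc klFun t ≤ |t - 1| ^ (2 : ℝ) := by simpa using klFun_le_sub_one_sq ht
      _ ≤ |t - 1| ^ (1 + ε) :=
        Real.rpow_le_rpow_of_exponent_ge' (abs_nonneg _) abs_le_one (by positivity) (by linarith)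
      _ ≤ ε⁻¹ * |t - 1| ^ (1 + ε) :=
        le_mul_of_one_le_left (by positivity) ((one_le_inv₀ hε0).2 hε1)
  · have ht0 : 0 ≤ t - 1 := sub_nonneg.2 ht1
    calc klFun t ≤ (t - 1) * Real.log t := klFun_le_sub_one_mul_log (by linarith)
      _ ≤ (t - 1) * (ε⁻¹ * (t - 1) ^ ε) :=
        mul_le_mul_of_nonneg_left (log_le_inv_mul_sub_one_rpow hε0 hε1 ht1) ht0
      _ = ε⁻¹ * |t - 1| ^ (1 + ε) := by
        rw [abs_of_nonneg ht0, Real.rpow_one_add' ht0 (by positivity)]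
        ring

lemma mul_log_div_le_rpow_add_sub (hε0 : 0 < ε) (hε1 : ε ≤ 1) (hq : 0 ≤ q) (hs : 0 < s) :
    q * Real.log (q / s) ≤ ε⁻¹ * (s ^ (-ε) * |q - s| ^ (1 + ε)) + (q - s) := by
  have kl_eq : s * klFun (q / s) = q * Real.log (q / s) - (q - s) := by
    rw [klFun_apply]
    field_simp
    ring
  have rpow_eq : s * |q / s - 1| ^ (1 + ε) = s ^ (-ε) * |q - s| ^ (1 + ε) := by
    rw [div_sub_one hs.ne', abs_div, abs_of_pos hs, Real.div_rpow (abs_nonneg _) hs.le,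
      Real.rpow_one_add' hs.le (by positivity), Real.rpow_neg hs.le]
    field_simp
  have := mul_le_mul_of_nonneg_left
    (klFun_le_inv_mul_abs_sub_one_rpow hε0 hε1 (div_nonneg hq hs.le)) hs.le
  rw [kl_eq, mul_left_comm, rpow_eq] at this
  linarith

lemma rpow_one_add_le_rpow_mul (hε0 : 0 ≤ ε) (hq : 0 ≤ q) (hqd : q ≤ d) :
    q ^ (1 + ε) ≤ d ^ ε * q := by
  rw [Real.rpow_one_add' hq (by positivity), mul_comm]
  gcongr

end Pointwise

section Integral

variable {α : Type*} [MeasurableSpace α] {μ : Measure α} {f g h k p ψ : α → ℝ} {ε Δ : ℝ}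

lemma eInt_mono_ae (hfg : f ≤ᵐ[μ] g) : eInt μ f ≤ eInt μ g := by
  refine EReal.sub_le_sub (EReal.coe_ennreal_le_coe_ennreal_iff.2 ?_)
    (EReal.coe_ennreal_le_coe_ennreal_iff.2 ?_) <;>
  · refine lintegral_mono_ae (hfg.mono fun x hx => ENNReal.ofReal_le_ofReal ?_)
    linarith

lemma eInt_le_lintegral_ofReal : eInt μ f ≤ ((∫⁻ x, ENNReal.ofReal (f x) ∂μ) : EReal) :=
  EReal.sub_le_of_le_add (le_add_of_nonneg_right (EReal.coe_ennreal_nonneg _))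

lemma eInt_eq_integral (hf : Integrable f μ) : eInt μ f = ((∫ x, f x ∂μ : ℝ) : EReal) := by
  have neg_part_ne_top : ∫⁻ x, ENNReal.ofReal (-f x) ∂μ ≠ ⊤ := hf.neg.lintegral_lt_top.ne
  rw [integral_eq_lintegral_pos_part_sub_lintegral_neg_part hf, EReal.coe_sub,
    EReal.coe_ennreal_toReal hf.lintegral_lt_top.ne, EReal.coe_ennreal_toReal neg_part_ne_top, eInt]

lemma eInt_add_le_lintegral_ofReal (hh : AEStronglyMeasurable h μ) (hh0 : 0 ≤ᵐ[μ] h)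
    (hk : Integrable k μ) (hk0 : ∫ x, k x ∂μ ≤ 0) :
    eInt μ (h + k) ≤ ((∫⁻ x, ENNReal.ofReal (h x) ∂μ) : EReal) := by
  by_cases h_top : ∫⁻ x, ENNReal.ofReal (h x) ∂μ = ⊤
  · simp only [h_top, EReal.coe_ennreal_top, le_top]
  have h_int : Integrable h μ := (lintegral_ofReal_ne_top_iff_integrable hh hh0).1 h_top
  calc eInt μ (h + k) = ((∫ x, h x ∂μ + ∫ x, k x ∂μ : ℝ) : EReal) := by
        rw [eInt_eq_integral (h_int.add hk), integral_add' h_int hk]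
    _ ≤ ((∫ x, h x ∂μ : ℝ) : EReal) := EReal.coe_le_coe_iff.2 (add_le_of_nonpos_right hk0)
    _ = eInt μ h := (eInt_eq_integral h_int).symm
    _ ≤ _ := eInt_le_lintegral_ofReal

lemma eInt_mul_log_div_le_lintegral_rpow (hε0 : 0 < ε) (hε1 : ε ≤ 1)
    (hp : Integrable p μ) (hp0 : 0 ≤ᵐ[μ] p) (hψ : Integrable ψ μ) (hψ0 : ∀ᵐ x ∂μ, 0 < ψ x)
    (hpψ : ∫ x, p x ∂μ ≤ ∫ x, ψ x ∂μ) :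
    eInt μ (fun x => p x * Real.log (p x / ψ x)) ≤
      ((∫⁻ x, ENNReal.ofReal (ε⁻¹ * (ψ x ^ (-ε) * |p x - ψ x| ^ (1 + ε))) ∂μ) : EReal) := by
  have bound : (fun x => p x * Real.log (p x / ψ x)) ≤ᵐ[μ]
      (fun x => ε⁻¹ * (ψ x ^ (-ε) * |p x - ψ x| ^ (1 + ε))) + (p - ψ) := by
    filter_upwards [hp0, hψ0] with x hpx hψx
    exact mul_log_div_le_rpow_add_sub hε0 hε1 hpx hψx
  refine (eInt_mono_ae bound).trans (eInt_add_le_lintegral_ofReal ?_ ?_ (hp.sub hψ) ?_)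
  · have := hp.aemeasurable
    have := hψ.aemeasurable
    exact AEMeasurable.aestronglyMeasurable (by fun_prop)
  · filter_upwards [hψ0] with x hψx
    positivity
  · rw [integral_sub' hp hψ]
    exact sub_nonpos.2 hpψ

lemma lintegral_rpow_one_add_le (hε0 : 0 ≤ ε) (hψ0 : 0 ≤ᵐ[μ] ψ)
    (hΔ : ∀ᵐ x ∂μ, |p x - ψ x| ≤ Δ) :
    ∫⁻ x, ENNReal.ofReal (ε⁻¹ * (ψ x ^ (-ε) * |p x - ψ x| ^ (1 + ε))) ∂μ ≤
      ENNReal.ofReal (ε⁻¹ * Δ ^ ε) * ∫⁻ x, ENNReal.ofReal (ψ x ^ (-ε) * |p x - ψ x|) ∂μ := by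
  rw [← lintegral_const_mul' _ _ ENNReal.ofReal_ne_top]
  refine lintegral_mono_ae ?_
  filter_upwards [hψ0, hΔ] with x hψx hΔx
  have hΔ0 : 0 ≤ Δ := (abs_nonneg _).trans hΔx
  rw [← ENNReal.ofReal_mul (by positivity)]
  refine ENNReal.ofReal_le_ofReal ?_
  have hψx' : 0 ≤ ψ x ^ (-ε) := Real.rpow_nonneg hψx _
  calc ε⁻¹ * (ψ x ^ (-ε) * |p x - ψ x| ^ (1 + ε))
      ≤ ε⁻¹ * (ψ x ^ (-ε) * (Δ ^ ε * |p x - ψ x|)) := by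
        gcongr
        exact rpow_one_add_le_rpow_mul hε0 (abs_nonneg _) hΔx
    _ = ε⁻¹ * Δ ^ ε * (ψ x ^ (-ε) * |p x - ψ x|) := by ring

end Integral

theorem stmt_16_general {α : Type*} [MeasurableSpace α] {μ : Measure α} {ε Δ : ℝ} {p ψ : α → ℝ}
    (hε0 : 0 < ε) (hε1 : ε ≤ 1)
    (hp : AEMeasurable p μ) (hp0 : 0 ≤ᵐ[μ] p)
    (hψ : AEMeasurable ψ μ) (hψ0 : ∀ᵐ x ∂μ, 0 < ψ x)
    (hψ_top : ∫⁻ x, ENNReal.ofReal (ψ x) ∂μ ≠ ⊤)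
    (hpψ : ∫⁻ x, ENNReal.ofReal (p x) ∂μ ≤ ∫⁻ x, ENNReal.ofReal (ψ x) ∂μ)
    (hΔ0 : 0 ≤ Δ) (hΔ : ∀ᵐ x ∂μ, |p x - ψ x| ≤ Δ) :
    eInt μ (fun x => p x * Real.log (p x / ψ x)) ≤ (ε⁻¹ : ℝ) * ((Δ ^ ε : ℝ) : EReal) *
      ((∫⁻ x, ENNReal.ofReal (ψ x ^ (-ε) * |p x - ψ x|) ∂μ) : EReal) := by
  have hψ0' : 0 ≤ᵐ[μ] ψ := hψ0.mono fun _ => le_of_lt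
  have hp_int : Integrable p μ := (lintegral_ofReal_ne_top_iff_integrable
    hp.aestronglyMeasurable hp0).1 (ne_top_of_le_ne_top hψ_top hpψ)
  have hψ_int : Integrable ψ μ :=
    (lintegral_ofReal_ne_top_iff_integrable hψ.aestronglyMeasurable hψ0').1 hψ_top
  have integral_le : ∫ x, p x ∂μ ≤ ∫ x, ψ x ∂μ := by
    rw [integral_eq_lintegral_of_nonneg_ae hp0 hp.aestronglyMeasurable,
      integral_eq_lintegral_of_nonneg_ae hψ0' hψ.aestronglyMeasurable]
    exact ENNReal.toReal_mono hψ_top hpψ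
  have coe_const : ((ENNReal.ofReal (ε⁻¹ * Δ ^ ε) : ENNReal) : EReal) =
      (ε⁻¹ : ℝ) * ((Δ ^ ε : ℝ) : EReal) := by
    rw [EReal.coe_ennreal_ofReal, max_eq_left (by positivity), EReal.coe_mul]
  rw [← coe_const, ← EReal.coe_ennreal_mul]
  exact (eInt_mul_log_div_le_lintegral_rpow hε0 hε1 hp_int hp0 hψ_int hψ0 integral_le).trans
    (EReal.coe_ennreal_le_coe_ennreal_iff.2
      (lintegral_rpow_one_add_le hε0.le hψ0' hΔ))

/-- **Inequality (6.3), second form.** For every `ε ∈ (0,1]` there is `C_ε > 0` such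
that for all random variables `X` with bounded density `p` and `Z` with density
`ψ > 0` a.e., with `Δ = sup_x |p(x) − ψ(x)|`:
`D(X‖Z) ≤ C_ε Δ^ε ∫ ψ^{-ε} |p − ψ|`. -/
theorem stmt_16 (ε : ℝ) (hε0 : 0 < ε) (hε1 : ε ≤ 1) :
    ∃ C : ℝ, 0 < C ∧
      ∀ p ψ : ℝ → ℝ,
        Measurable p → (∀ x, 0 ≤ p x) → (∫⁻ x, ENNReal.ofReal (p x)) = 1 →
        Measurable ψ → (∀ x, 0 ≤ ψ x) → (∫⁻ x, ENNReal.ofReal (ψ x)) = 1 →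
        (∀ᵐ x ∂(volume : Measure ℝ), 0 < ψ x) →
        ∀ M : ℝ, (∀ x, p x ≤ M) →
        ∀ Δ : ℝ, (∀ x, |p x - ψ x| ≤ Δ) →
        relEntD p ψ ≤ (C : EReal) * ((Δ ^ ε : ℝ) : EReal) *
          ((∫⁻ x, ENNReal.ofReal (ψ x ^ (-ε) * |p x - ψ x|)) : EReal) := by
  exact ⟨ε⁻¹, inv_pos.2 hε0, fun p ψ hp hp0 hp1 hψ _ hψ1 hψ0 _ _ Δ hΔ =>
    stmt_16_general hε0 hε1 hp.aemeasurable (.of_forall hp0) hψ.aemeasurable hψ0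
      (by simp [hψ1]) (hp1.trans hψ1.symm).le ((abs_nonneg _).trans (hΔ 0)) (.of_forall hΔ)⟩
end
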